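/- arXiv:math/0305371 — 4 statements merged into one kernel-verified Lean document; each statement's English description precedes it below -/
import Mathlib

section
/- Let (E,φ) be a finitely aligned product system of graphs over ℕ^k and {t_λ : λ ∈ E¹} a Toeplitz E-family in a C*-algebra B. Then {t_λ} satisfies relation (5) (t_μ* t_ν = ∑_{γ = μα = νβ ∈ MCE(μ,ν)} t_α t_β* for all μ,ν ∈ E¹), and hence is a Toeplitz–Cuntz–Krieger E-family, if and only if t_μ* t_ν = ∑_{γ = μα = νβ ∈ MCE(μ,ν)} t_α t_β* holds for every μ ∈ E¹_{e_i} and ν ∈ E¹_{e_j} with s(μ) = s(ν) and i ≠ j. -/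
open scoped Classical

noncomputable section

namespace PSG

variable {G : Type*} [Group G] {Λ : Type*}

/-- `g ≤ h` in the left-invariant partial order induced by the submonoid `P`. -/
def qle (P : Submonoid G) (g h : G) : Prop := g⁻¹ * h ∈ P

/-- `r` is a common upper bound of `p` and `q` in `P`. -/
def IsUB (P : Submonoid G) (p q r : G) : Prop := r ∈ P ∧ qle P p r ∧ qle P q r

/-- `r` is the least common upper bound of `p` and `q` in `P`. -/
def IsLUB2 (P : Submonoid G) (p q r : G) : Prop :=
  IsUB P p q r ∧ ∀ r', IsUB P p q r' → qle P r r'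

/-- `r` is the least upper bound in `P` of the set of degrees `D`. -/
def IsLUBFam (P : Submonoid G) (D : Set G) (r : G) : Prop :=
  r ∈ P ∧ (∀ p ∈ D, qle P p r) ∧ ∀ r' ∈ P, (∀ p ∈ D, qle P p r') → qle P r r'

/-- `(G, P)` is quasi-lattice ordered: `P ∩ P⁻¹ = {1}` and every pair of elements of `P`
with a common upper bound in `P` has a least upper bound in `P`. -/
def QuasiLatticeOrdered (P : Submonoid G) : Prop :=
  (∀ g ∈ P, g⁻¹ ∈ P → g = 1) ∧
    ∀ p ∈ P, ∀ q ∈ P, (∃ r, IsUB P p q r) → ∃ r, IsLUB2 P p q r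

/-- A product system of graphs over `P`, encoded on a single edge set `Λ` (which contains the
vertices as the elements of degree `1`), with degree map `d`, source and range maps `src`, `rng`
(valued in vertices), and partial multiplication `mul` (meaningful when `rng a = src b`). -/
structure IsProductSystem (P : Submonoid G) (d : Λ → G) (src rng : Λ → Λ)
    (mul : Λ → Λ → Λ) : Prop where
  countable : Countable Λ
  d_mem : ∀ a, d a ∈ P
  d_src : ∀ a, d (src a) = 1
  d_rng : ∀ a, d (rng a) = 1
  src_vertex : ∀ v, d v = 1 → src v = v
  rng_vertex : ∀ v, d v = 1 → rng v = v
  d_mul : ∀ a b, rng a = src b → d (mul a b) = d a * d b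
  src_mul : ∀ a b, rng a = src b → src (mul a b) = src a
  rng_mul : ∀ a b, rng a = src b → rng (mul a b) = rng b
  mul_assoc' : ∀ a b c, rng a = src b → rng b = src c →
    mul (mul a b) c = mul a (mul b c)
  src_mul_self : ∀ a, mul (src a) a = a
  mul_rng_self : ∀ a, mul a (rng a) = a
  factor : ∀ p q : G, p ∈ P → q ∈ P → ∀ c, d c = p * q →
    ∃! ab : Λ × Λ, d ab.1 = p ∧ d ab.2 = q ∧ rng ab.1 = src ab.2 ∧ mul ab.1 ab.2 = c

/-- `a` is an initial segment of `c`: `c = a • b` for some (necessarily unique) `b`. -/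
def IsInit (src rng : Λ → Λ) (mul : Λ → Λ → Λ) (a c : Λ) : Prop :=
  ∃ b, rng a = src b ∧ mul a b = c

/-- The set of minimal common extensions of `μ` and `ν`. -/
def MCE (P : Submonoid G) (d : Λ → G) (src rng : Λ → Λ) (mul : Λ → Λ → Λ)
    (μ ν : Λ) : Set Λ :=
  {γ | IsInit src rng mul μ γ ∧ IsInit src rng mul ν γ ∧ IsLUB2 P (d μ) (d ν) (d γ)}

/-- The product system is finitely aligned. -/
def FinitelyAligned (P : Submonoid G) (d : Λ → G) (src rng : Λ → Λ)
    (mul : Λ → Λ → Λ) : Prop :=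
  ∀ μ ν : Λ, (MCE P d src rng mul μ ν).Finite

/-- The set of minimal common extensions of a set `S` of edges. -/
def MCEset (P : Submonoid G) (d : Λ → G) (src rng : Λ → Λ) (mul : Λ → Λ → Λ)
    (S : Set Λ) : Set Λ :=
  {γ | (∀ α ∈ S, IsInit src rng mul α γ) ∧ IsLUBFam P (d '' S) (d γ)}

/-- `∨F`: the union of `MCE(S)` over the nonempty subsets `S ⊆ F`. -/
def vee (P : Submonoid G) (d : Λ → G) (src rng : Λ → Λ) (mul : Λ → Λ → Λ)
    (F : Finset Λ) : Set Λ :=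
  {γ | ∃ S : Finset Λ, S.Nonempty ∧ S ⊆ F ∧ γ ∈ MCEset P d src rng mul ↑S}

/-- Given that `a` is an initial segment of `c`, the (unique) complementary segment;
junk value `c` otherwise. -/
def tail (src rng : Λ → Λ) (mul : Λ → Λ → Λ) (a c : Λ) : Λ :=
  if h : IsInit src rng mul a c then h.choose else c

section CstarFamilies

variable (P : Submonoid G) (d : Λ → G) (src rng : Λ → Λ) (mul : Λ → Λ → Λ)
variable {B : Type*} [CStarAlgebra B] [PartialOrder B] [StarOrderedRing B]

/-- A Toeplitz `E`-family in a C*-algebra `B` (conditions (1)–(4)). -/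
structure IsToeplitzFamily (t : Λ → B) : Prop where
  vertex_sa : ∀ v, d v = 1 → IsSelfAdjoint (t v)
  vertex_idem : ∀ v, d v = 1 → t v * t v = t v
  vertex_orth : ∀ v w, d v = 1 → d w = 1 → v ≠ w → t v * t w = 0
  mul_eq : ∀ a b, rng a = src b → t a * t b = t (mul a b)
  star_mul_self : ∀ a, star (t a) * t a = t (rng a)
  dom : ∀ p : G, p ∈ P → p ≠ 1 → ∀ v, d v = 1 → ∀ F : Finset Λ,
    (∀ a ∈ F, d a = p ∧ src a = v) → (∑ a ∈ F, t a * star (t a)) ≤ t v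

/-- The Nica-covariance/Cuntz–Krieger relation (5):
`tμ* tν = ∑_{γ = μα = νβ ∈ MCE(μ,ν)} tα tβ*`. -/
def TCKrel (t : Λ → B) : Prop :=
  ∀ μ ν : Λ, ∀ M : Finset Λ, ↑M = MCE P d src rng mul μ ν →
    star (t μ) * t ν =
      ∑ γ ∈ M, t (tail src rng mul μ γ) * star (t (tail src rng mul ν γ))

/-- A Toeplitz–Cuntz–Krieger `E`-family: conditions (1)–(5). -/
def IsTCKFamily (t : Λ → B) : Prop :=
  IsToeplitzFamily P d src rng mul t ∧ TCKrel P d src rng mul t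

/-- Condition (†): for every finite `R ⊆ P∖{1}`, every vertex `v`, and all finite sets
`F_p ⊆ s_p⁻¹(v)` (`p ∈ R`), the product `∏_{p ∈ R} (t_v − ∑_{a ∈ F_p} t_a t_a*)` is nonzero.
(The factors commute, so the product is stated for an arbitrary enumeration of `R`.) -/
def Dagger (t : Λ → B) : Prop :=
  ∀ R : List G, R.Nodup → (∀ p ∈ R, p ∈ P ∧ p ≠ 1) →
    ∀ v, d v = 1 → ∀ Fp : G → Finset Λ,
      (∀ p ∈ R, ∀ a ∈ Fp p, d a = p ∧ src a = v) →
        (R.map fun p => t v - ∑ a ∈ Fp p, t a * star (t a)).prod ≠ 0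

/-- The projection `Q^{∨F}_l = t_l t_l* ∏_{l α ∈ ∨F, d α ≠ 1} (t_{s(l)} − t_{lα} t_{lα}*)`.
(The factors commute, so the product is computed over an arbitrary enumeration.) -/
def Qproj (t : Λ → B) (F : Finset Λ) (l : Λ) : B :=
  if h : {α : Λ | d α ≠ 1 ∧ rng l = src α ∧ mul l α ∈ vee P d src rng mul F}.Finite then
    t l * star (t l) *
      (h.toFinset.toList.map fun α =>
        t (src l) - t (mul l α) * star (t (mul l α))).prod
  else 0

end CstarFamilies

/-- The positive cone `ℕ^k` inside `ℤ^k` (written multiplicatively). -/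
def posCone (k : ℕ) : Submonoid (Multiplicative (Fin k → ℤ)) where
  carrier := {g | ∀ i, 0 ≤ Multiplicative.toAdd g i}
  mul_mem' := by
    intro a b ha hb i
    simpa using add_nonneg (ha i) (hb i)
  one_mem' := by
    intro i
    simp

/-- The `i`-th standard generator of `ℕ^k ⊆ ℤ^k`. -/
def egen (k : ℕ) (i : Fin k) : Multiplicative (Fin k → ℤ) :=
  Multiplicative.ofAdd (Pi.single i 1)

end PSG
namespace PSG

/-- The pairs `(α, β)` with `μα = νβ` of degree `d μ ∨ d ν`, for degrees in `ℕ^k`. -/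
def extPairs {k : ℕ} {Λ : Type*} (d : Λ → Multiplicative (Fin k → ℤ)) (src rng : Λ → Λ)
    (mul : Λ → Λ → Λ) (μ ν : Λ) : Set (Λ × Λ) :=
  {p | rng μ = src p.1 ∧ rng ν = src p.2 ∧ mul μ p.1 = mul ν p.2 ∧
    ∀ i, (d (mul μ p.1)).toAdd i = max ((d μ).toAdd i) ((d ν).toAdd i)}

/-- Relation (5) for the single pair `μ, ν`, as a sum over pairs of tails. -/
def NicaRel {k : ℕ} {Λ : Type*} (d : Λ → Multiplicative (Fin k → ℤ)) (src rng : Λ → Λ)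
    (mul : Λ → Λ → Λ) {B : Type*} [CStarAlgebra B] (t : Λ → B) (μ ν : Λ) : Prop :=
  ∃ S : Finset (Λ × Λ), (∀ p, p ∈ S ↔ p ∈ extPairs d src rng mul μ ν) ∧
    star (t μ) * t ν = ∑ p ∈ S, t p.1 * star (t p.2)

theorem isLUB2_posCone_iff {k : ℕ} {p q r : Multiplicative (Fin k → ℤ)}
    (hp : p ∈ posCone k) :
    IsLUB2 (posCone k) p q r ↔ ∀ i, r.toAdd i = max (p.toAdd i) (q.toAdd i) := by
  have key : ∀ a b : Multiplicative (Fin k → ℤ),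
      qle (posCone k) a b ↔ ∀ i, a.toAdd i ≤ b.toAdd i := by
    intro a b
    change (∀ i, 0 ≤ (a⁻¹ * b).toAdd i) ↔ _
    refine forall_congr' fun i => ?_
    simp only [toAdd_mul, toAdd_inv, Pi.add_apply, Pi.neg_apply]
    omega
  have hp' : ∀ i, 0 ≤ p.toAdd i := hp
  constructor
  · rintro ⟨⟨hr, h1, h2⟩, h3⟩ i
    rw [key] at h1 h2
    have h4 := (key _ _).1 (h3 (Multiplicative.ofAdd fun i => max (p.toAdd i) (q.toAdd i))
      ⟨fun i => le_max_of_le_left (hp' i), (key _ _).2 fun i => le_max_left _ _,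
        (key _ _).2 fun i => le_max_right _ _⟩) i
    exact le_antisymm h4 (max_le (h1 i) (h2 i))
  · intro h
    refine ⟨⟨fun i => ?_, (key _ _).2 fun i => ?_, (key _ _).2 fun i => ?_⟩, ?_⟩
    · rw [h i]; exact le_max_of_le_left (hp' i)
    · rw [h i]; exact le_max_left _ _
    · rw [h i]; exact le_max_right _ _
    · rintro r' ⟨-, h1, h2⟩
      rw [key] at h1 h2 ⊢
      intro i
      rw [h i]; exact max_le (h1 i) (h2 i)

section Factorisation

variable {G : Type*} [Group G] {Λ : Type*} {P : Submonoid G} {d : Λ → G} {src rng : Λ → Λ}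
  {mul : Λ → Λ → Λ}

theorem IsProductSystem.factor_unique (h : IsProductSystem P d src rng mul) {a b a' b' : Λ}
    (hab : rng a = src b) (hab' : rng a' = src b') (he : mul a b = mul a' b')
    (hd : d a = d a') : a = a' ∧ b = b' := by
  have h1 := h.d_mul a b hab
  have h2 := h.d_mul a' b' hab'
  have h3 : d b = d b' := by
    rw [he, h2, hd] at h1
    exact (mul_left_cancel h1).symm
  have := (h.factor (d a) (d b) (h.d_mem a) (h.d_mem b) (mul a b) h1).unique
    (y₁ := (a, b)) (y₂ := (a', b')) ⟨rfl, rfl, hab, rfl⟩ ⟨hd.symm, h3.symm, hab', he.symm⟩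
  simpa using this

theorem IsProductSystem.tail_mul (h : IsProductSystem P d src rng mul) {a b : Λ}
    (hab : rng a = src b) : tail src rng mul a (mul a b) = b := by
  have hi : IsInit src rng mul a (mul a b) := ⟨b, hab, rfl⟩
  rw [tail, dif_pos hi]
  exact (h.factor_unique hi.choose_spec.1 hab hi.choose_spec.2 rfl).2

/-- If `ab = ηδ` and `d a ≤ d η`, then `η` extends `a`. -/
theorem IsProductSystem.exists_middle (h : IsProductSystem P d src rng mul) {a b η δ : Λ}
    (hab : rng a = src b) (hηδ : rng η = src δ) (he : mul a b = mul η δ)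
    (hle : (d a)⁻¹ * d η ∈ P) :
    ∃ α, rng a = src α ∧ mul a α = η ∧ rng α = src δ ∧ mul α δ = b := by
  obtain ⟨⟨x, α⟩, ⟨h1, -, h3, h4⟩, -⟩ :=
    h.factor (d a) ((d a)⁻¹ * d η) (h.d_mem a) hle η (by simp)
  simp only at h1 h3 h4
  subst h4
  have h5 : rng α = src δ := by rw [← h.rng_mul x α h3, hηδ]
  have h6 : rng x = src (mul α δ) := by rw [h.src_mul _ _ h5, h3]
  obtain ⟨rfl, rfl⟩ := h.factor_unique hab h6 (by rw [he, h.mul_assoc' _ _ _ h3 h5]) h1.symm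
  exact ⟨α, h3, rfl, h5, rfl⟩

end Factorisation

section Toeplitz

variable {k : ℕ} {Λ : Type*} {d : Λ → Multiplicative (Fin k → ℤ)} {src rng : Λ → Λ}
  {mul : Λ → Λ → Λ}

theorem IsProductSystem.src_eq_of_mem_extPairs (h : IsProductSystem (posCone k) d src rng mul)
    {μ ν : Λ} {p : Λ × Λ} (hp : p ∈ extPairs d src rng mul μ ν) : src μ = src ν := by
  obtain ⟨h1, h2, h3, -⟩ := hp
  rw [← h.src_mul _ _ h1, h3, h.src_mul _ _ h2]

theorem mem_extPairs_swap {μ ν : Λ} {p : Λ × Λ} :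
    p.swap ∈ extPairs d src rng mul ν μ ↔ p ∈ extPairs d src rng mul μ ν := by
  simp only [extPairs, Set.mem_ofPred_eq, Prod.fst_swap, Prod.snd_swap]
  constructor
  · rintro ⟨h1, h2, h3, h4⟩
    exact ⟨h2, h1, h3.symm, fun i => by rw [← h3, h4 i, max_comm]⟩
  · rintro ⟨h1, h2, h3, h4⟩
    exact ⟨h2, h1, h3.symm, fun i => by rw [← h3, h4 i, max_comm]⟩

variable {B : Type*} [CStarAlgebra B] {t : Λ → B}

theorem NicaRel.symm {μ ν : Λ} (h : NicaRel d src rng mul t μ ν) :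
    NicaRel d src rng mul t ν μ := by
  obtain ⟨S, hS, hs⟩ := h
  refine ⟨S.map (Equiv.prodComm Λ Λ).toEmbedding, fun p => ?_, ?_⟩
  · rw [← mem_extPairs_swap, ← hS, Finset.mem_map_equiv]
    rfl
  · have := congrArg star hs
    simp only [star_mul, star_star, star_sum] at this
    simpa using this

/-- The parametrisation of `MCE(μ, ν)` by pairs of tails. -/
theorem IsProductSystem.sum_MCE_eq (h : IsProductSystem (posCone k) d src rng mul) {μ ν : Λ}
    {M : Finset Λ} (hM : ↑M = MCE (posCone k) d src rng mul μ ν) {S : Finset (Λ × Λ)}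
    (hS : ∀ p, p ∈ S ↔ p ∈ extPairs d src rng mul μ ν) :
    ∑ γ ∈ M, t (tail src rng mul μ γ) * star (t (tail src rng mul ν γ)) =
      ∑ p ∈ S, t p.1 * star (t p.2) := by
  have hM' : ∀ γ, γ ∈ M ↔ γ ∈ MCE (posCone k) d src rng mul μ ν := fun γ => by
    rw [← hM, Finset.mem_coe]
  refine Finset.sum_bij' (fun γ _ => (tail src rng mul μ γ, tail src rng mul ν γ))
    (fun p _ => mul μ p.1) ?_ ?_ ?_ ?_ ?_
  · intro γ hγ
    obtain ⟨⟨α, h1, rfl⟩, ⟨β, h2, h3⟩, h4⟩ := (hM' γ).1 hγ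
    rw [isLUB2_posCone_iff (h.d_mem _)] at h4
    rw [hS, h.tail_mul h1, ← h3, h.tail_mul h2]
    exact ⟨h1, h2, h3.symm, h4⟩
  · intro p hp
    obtain ⟨h1, h2, h3, h4⟩ := (hS p).1 hp
    exact (hM' _).2 ⟨⟨_, h1, rfl⟩, ⟨_, h2, h3.symm⟩,
      (isLUB2_posCone_iff (h.d_mem _)).2 h4⟩
  · intro γ hγ
    obtain ⟨⟨α, h1, rfl⟩, -⟩ := (hM' γ).1 hγ
    simp only [h.tail_mul h1]
  · intro p hp
    obtain ⟨h1, h2, h3, -⟩ := (hS p).1 hp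
    ext
    · exact h.tail_mul h1
    · simp only [h3, h.tail_mul h2]
  · intro γ _
    rfl

theorem IsProductSystem.finite_extPairs (h : IsProductSystem (posCone k) d src rng mul)
    {μ ν : Λ} (hfin : (MCE (posCone k) d src rng mul μ ν).Finite) :
    (extPairs d src rng mul μ ν).Finite := by
  refine (hfin.image fun γ => (tail src rng mul μ γ, tail src rng mul ν γ)).subset ?_
  rintro ⟨α, β⟩ ⟨h1, h2, h3, h4⟩
  simp only at h1 h2 h3 h4
  refine ⟨mul μ α, ⟨⟨_, h1, rfl⟩, ⟨_, h2, h3.symm⟩,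
    (isLUB2_posCone_iff (h.d_mem _)).2 h4⟩, ?_⟩
  ext
  · exact h.tail_mul h1
  · simp only [h3, h.tail_mul h2]

variable [PartialOrder B]

theorem IsToeplitzFamily.src_mul (h : IsProductSystem (posCone k) d src rng mul)
    (hT : IsToeplitzFamily (posCone k) d src rng mul t) (a : Λ) : t (src a) * t a = t a := by
  rw [hT.mul_eq _ _ (h.rng_vertex _ (h.d_src a)), h.src_mul_self]

theorem IsToeplitzFamily.mul_star_rng (h : IsProductSystem (posCone k) d src rng mul)
    (hT : IsToeplitzFamily (posCone k) d src rng mul t) (a : Λ) :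
    t a * star (t (rng a)) = t a := by
  rw [(hT.vertex_sa _ (h.d_rng a)).star_eq,
    hT.mul_eq _ _ (h.src_vertex _ (h.d_rng a)).symm, h.mul_rng_self]

/-- Relation (5) for `(μ₁μ₂, ν)` follows from relation (5) for `(μ₁, ν)` and for all `(μ₂, α)`
with `α` the tail of `μ₁` in a minimal common extension of `μ₁` and `ν`. -/
theorem IsToeplitzFamily.nicaRel_mul (h : IsProductSystem (posCone k) d src rng mul)
    (hT : IsToeplitzFamily (posCone k) d src rng mul t) {μ₁ μ₂ ν : Λ}
    (hμ : rng μ₁ = src μ₂) (h1 : NicaRel d src rng mul t μ₁ ν)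
    (h2 : ∀ p ∈ extPairs d src rng mul μ₁ ν, NicaRel d src rng mul t μ₂ p.1) :
    NicaRel d src rng mul t (mul μ₁ μ₂) ν := by
  obtain ⟨S, hS, hs⟩ := h1
  have h2' : ∀ p : Λ × Λ, ∃ S' : Finset (Λ × Λ), p ∈ S →
      (∀ q, q ∈ S' ↔ q ∈ extPairs d src rng mul μ₂ p.1) ∧
        star (t μ₂) * t p.1 = ∑ q ∈ S', t q.1 * star (t q.2) := by
    intro p
    by_cases hp : p ∈ S
    · obtain ⟨S', h⟩ := h2 p ((hS p).1 hp)
      exact ⟨S', fun _ => h⟩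
    · exact ⟨∅, fun h => absurd h hp⟩
  choose S' hS' using h2'
  have hdm : ∀ a b, rng a = src b → ∀ i,
      (d (mul a b)).toAdd i = (d a).toAdd i + (d b).toAdd i := fun a b hab i => by
    rw [h.d_mul a b hab, toAdd_mul, Pi.add_apply]
  have hcomp : ∀ p ∈ S, ∀ q ∈ S' p, rng p.2 = src q.2 := by
    intro p hp q hq
    obtain ⟨a1, a2, a3, -⟩ := (hS p).1 hp
    obtain ⟨b1, b2, b3, -⟩ := ((hS' p hp).1 q).1 hq
    rw [← b2, ← h.rng_mul _ _ a1, a3, h.rng_mul _ _ a2]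
  refine ⟨(S.sigma S').image fun x => (x.2.1, mul x.1.2 x.2.2), fun p => ?_, ?_⟩
  · rw [Finset.mem_image]
    constructor
    · rintro ⟨⟨⟨α, β⟩, ⟨γ, δ⟩⟩, hx, rfl⟩
      obtain ⟨hp, hq⟩ := Finset.mem_sigma.1 hx
      simp only at hp hq
      have hc := hcomp _ hp _ hq
      obtain ⟨a1, a2, a3, a4⟩ := (hS _).1 hp
      obtain ⟨b1, b2, b3, b4⟩ := ((hS' _ hp).1 _).1 hq
      simp only at hc a1 a2 a3 a4 b1 b2 b3 b4
      refine ⟨by rw [h.rng_mul _ _ hμ, b1], by rw [h.src_mul _ _ hc, a2], ?_, fun i => ?_⟩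
      · simp only
        rw [h.mul_assoc' _ _ _ hμ b1, b3, ← h.mul_assoc' _ _ _ a1 b2, a3,
          h.mul_assoc' _ _ _ a2 hc]
      · have e1 := a4 i
        have e2 := b4 i
        have e3 := h.d_mem μ₂ i
        simp only
        rw [h.mul_assoc' _ _ _ hμ b1, hdm _ _ (by rw [h.src_mul _ _ b1, hμ]), hdm _ _ hμ]
        rw [hdm _ _ a1] at e1
        omega
    · obtain ⟨γ, ε⟩ := p
      rintro ⟨c1, c2, c3, c4⟩
      simp only at c1 c2 c3 c4
      rw [h.rng_mul _ _ hμ] at c1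
      have hμγ : rng μ₁ = src (mul μ₂ γ) := by rw [h.src_mul _ _ c1, hμ]
      rw [h.mul_assoc' _ _ _ hμ c1] at c3 c4
      have hm2 := h.d_mem μ₂
      have hm1 := h.d_mem μ₁
      obtain ⟨⟨η, δ⟩, ⟨f1, -, f3, f4⟩, -⟩ := h.factor
        (Multiplicative.ofAdd fun i => max ((d μ₁).toAdd i) ((d ν).toAdd i))
        ((Multiplicative.ofAdd fun i => max ((d μ₁).toAdd i) ((d ν).toAdd i))⁻¹ *
          d (mul μ₁ (mul μ₂ γ)))
        (fun i => le_max_of_le_left (hm1 i)) (fun i => by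
          have e1 := c4 i
          have e2 := hm2 i
          rw [hdm _ _ hμ] at e1
          simp only [toAdd_mul, toAdd_inv, toAdd_ofAdd, Pi.add_apply, Pi.neg_apply]
          omega) (mul μ₁ (mul μ₂ γ)) (by simp)
      simp only at f1 f3 f4
      obtain ⟨α, g1, g2, g3, g4⟩ := h.exists_middle hμγ f3 f4.symm (fun i => by
        simp only [f1, toAdd_mul, toAdd_inv, toAdd_ofAdd, Pi.add_apply, Pi.neg_apply]
        omega)
      obtain ⟨β, k1, k2, k3, k4⟩ := h.exists_middle c2 f3 (by rw [f4, c3]) (fun i => by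
        simp only [f1, toAdd_mul, toAdd_inv, toAdd_ofAdd, Pi.add_apply, Pi.neg_apply]
        omega)
      have hp : (α, β) ∈ S := (hS _).2 ⟨g1, k1, by simp only [g2, k2], fun i => by
        simp only [g2, f1, toAdd_ofAdd]⟩
      refine ⟨⟨(α, β), (γ, δ)⟩, Finset.mem_sigma.2 ⟨hp, ((hS' _ hp).1 _).2 ?_⟩, ?_⟩
      · refine ⟨c1, g3, g4.symm, fun i => ?_⟩
        have e1 := c4 i
        have e2 := hm2 i
        have e3 : (d η).toAdd i = max ((d μ₁).toAdd i) ((d ν).toAdd i) := by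
          rw [f1, toAdd_ofAdd]
        rw [← g2, hdm _ _ g1] at e3
        rw [hdm _ _ hμγ, hdm _ _ hμ] at e1
        simp only
        omega
      · simp only [k4]
  · rw [Finset.sum_image, Finset.sum_sigma, ← hT.mul_eq _ _ hμ, star_mul, mul_assoc, hs,
      Finset.mul_sum]
    · refine Finset.sum_congr rfl fun p hp => ?_
      rw [← mul_assoc, (hS' p hp).2, Finset.sum_mul]
      refine Finset.sum_congr rfl fun q hq => ?_
      rw [← hT.mul_eq _ _ (hcomp p hp q hq), star_mul, mul_assoc]
    · rintro ⟨⟨α, β⟩, ⟨γ, δ⟩⟩ hx ⟨⟨α', β'⟩, ⟨γ', δ'⟩⟩ hx' he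
      obtain ⟨hp, hq⟩ := Finset.mem_sigma.1 hx
      obtain ⟨hp', hq'⟩ := Finset.mem_sigma.1 hx'
      obtain ⟨rfl, he2⟩ := Prod.mk.inj he
      have hc := hcomp _ hp _ hq
      have hc' := hcomp _ hp' _ hq'
      obtain ⟨a1, a2, a3, a4⟩ := (hS _).1 hp
      obtain ⟨b1, b2, b3, b4⟩ := (hS _).1 hp'
      simp only at hc hc' he2 a1 a2 a3 a4 b1 b2 b3 b4
      have hβ : d β = d β' := by
        apply Multiplicative.toAdd.injective
        funext i
        have e1 := a4 i
        have e2 := b4 i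
        rw [a3, hdm _ _ a2] at e1
        rw [b3, hdm _ _ b2] at e2
        omega
      obtain ⟨rfl, rfl⟩ := h.factor_unique hc hc' he2 hβ
      obtain ⟨-, rfl⟩ := h.factor_unique a1 b1 (a3.trans b3.symm) rfl
      rfl

theorem IsToeplitzFamily.star_mul_eq_zero_of_src_ne
    (h : IsProductSystem (posCone k) d src rng mul)
    (hT : IsToeplitzFamily (posCone k) d src rng mul t) {μ ν : Λ} (hne : src μ ≠ src ν) :
    star (t μ) * t ν = 0 := by
  rw [← hT.src_mul h μ, ← hT.src_mul h ν, star_mul, (hT.vertex_sa _ (h.d_src μ)).star_eq,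
    mul_assoc, ← mul_assoc (t (src μ)), hT.vertex_orth _ _ (h.d_src _) (h.d_src _) hne]
  simp

theorem IsToeplitzFamily.star_mul_eq_zero_of_ne [StarOrderedRing B]
    (h : IsProductSystem (posCone k) d src rng mul)
    (hT : IsToeplitzFamily (posCone k) d src rng mul t) {μ ν : Λ} (hd : d μ = d ν)
    (hne : μ ≠ ν) : star (t μ) * t ν = 0 := by
  by_cases hs : src μ = src ν
  swap
  · exact hT.star_mul_eq_zero_of_src_ne h hs
  by_cases h1 : d μ = 1
  · rw [(hT.vertex_sa _ h1).star_eq, hT.vertex_orth _ _ h1 (hd ▸ h1) hne]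
  have hdom := hT.dom (d μ) (h.d_mem μ) h1 (src ν) (h.d_src ν) {μ, ν} (by
    simp [hs, hd])
  rw [Finset.sum_pair hne] at hdom
  have hc := star_left_conjugate_le_conjugate hdom (t ν)
  have e1 : star (t ν) * t (src ν) * t ν = t (rng ν) := by
    rw [mul_assoc, hT.src_mul h, hT.star_mul_self]
  have e2 : star (t ν) * (t μ * star (t μ) + t ν * star (t ν)) * t ν =
      star (star (t μ) * t ν) * (star (t μ) * t ν) + t (rng ν) := by
    have : star (t ν) * (t ν * star (t ν)) * t ν = t (rng ν) := by
      rw [← mul_assoc, mul_assoc, hT.star_mul_self, hT.vertex_idem _ (h.d_rng ν)]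
    rw [mul_add, add_mul, this, star_mul, star_star]
    simp only [mul_assoc]
  rw [e1, e2] at hc
  have h0 := le_antisymm (by simpa using hc) (star_mul_self_nonneg (star (t μ) * t ν))
  exact CStarRing.star_mul_self_eq_zero_iff _ |>.1 h0

theorem IsToeplitzFamily.nicaRel_of_src_ne (h : IsProductSystem (posCone k) d src rng mul)
    (hT : IsToeplitzFamily (posCone k) d src rng mul t) {μ ν : Λ} (hne : src μ ≠ src ν) :
    NicaRel d src rng mul t μ ν := by
  refine ⟨∅, fun p => ?_, by simpa using hT.star_mul_eq_zero_of_src_ne h hne⟩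
  simpa using fun hp => hne (h.src_eq_of_mem_extPairs hp)

theorem IsToeplitzFamily.nicaRel_vertex (h : IsProductSystem (posCone k) d src rng mul)
    (hT : IsToeplitzFamily (posCone k) d src rng mul t) {μ : Λ} (hμ : d μ = 1) (ν : Λ) :
    NicaRel d src rng mul t μ ν := by
  by_cases hs : src μ = src ν
  swap
  · exact hT.nicaRel_of_src_ne h hs
  obtain rfl : μ = src ν := by rw [← hs, h.src_vertex μ hμ]
  have hr : rng (src ν) = src ν := h.rng_vertex _ hμ
  have hr' : rng ν = src (rng ν) := (h.src_vertex _ (h.d_rng ν)).symm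
  refine ⟨{(ν, rng ν)}, fun p => ?_, ?_⟩
  · rw [Finset.mem_singleton]
    constructor
    · rintro rfl
      refine ⟨hr, hr', by rw [h.src_mul_self, h.mul_rng_self], fun i => ?_⟩
      have := h.d_mem ν i
      simp only [h.src_mul_self, hμ, toAdd_one, Pi.zero_apply]
      omega
    · obtain ⟨α, β⟩ := p
      rintro ⟨h1, h2, h3, h4⟩
      simp only at h1 h2 h3 h4
      have h5 : mul (src ν) α = α := by rw [← hr, h1, h.src_mul_self]
      have h6 : d α = d ν := by
        apply Multiplicative.toAdd.injective
        funext i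
        have h7 := h4 i
        have := h.d_mem ν i
        rw [h5, hμ, toAdd_one, Pi.zero_apply] at h7
        omega
      rw [h5] at h3
      have h8 : rng α = src (rng α) := (h.src_vertex _ (h.d_rng α)).symm
      obtain ⟨rfl, rfl⟩ := h.factor_unique h8 h2 (by rw [h.mul_rng_self, h3]) h6
      rfl
  · rw [Finset.sum_singleton, hT.mul_star_rng h, (hT.vertex_sa _ hμ).star_eq, hT.src_mul h]

theorem IsToeplitzFamily.nicaRel_of_d_eq [StarOrderedRing B]
    (h : IsProductSystem (posCone k) d src rng mul)
    (hT : IsToeplitzFamily (posCone k) d src rng mul t) {μ ν : Λ} (hd : d μ = d ν) :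
    NicaRel d src rng mul t μ ν := by
  by_cases hne : μ = ν
  · subst hne
    have hr : rng μ = src (rng μ) := (h.src_vertex _ (h.d_rng μ)).symm
    refine ⟨{(rng μ, rng μ)}, fun p => ?_, ?_⟩
    · rw [Finset.mem_singleton]
      constructor
      · rintro rfl
        exact ⟨hr, hr, rfl, fun i => by simp [h.mul_rng_self]⟩
      · obtain ⟨α, β⟩ := p
        rintro ⟨h1, h2, h3, h4⟩
        simp only at h1 h2 h3 h4
        have hd' : d μ = d (mul μ α) := by
          apply Multiplicative.toAdd.injective
          funext i
          simpa using (h4 i).symm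
        obtain ⟨-, rfl⟩ := h.factor_unique h1 h2 h3 rfl
        have hα : d α = 1 := by simpa [h.d_mul _ _ h1] using hd'
        rw [h1, h.src_vertex _ hα]
    · rw [Finset.sum_singleton, hT.star_mul_self, (hT.vertex_sa _ (h.d_rng μ)).star_eq,
        hT.vertex_idem _ (h.d_rng μ)]
  · refine ⟨∅, fun p => ?_, by simpa using hT.star_mul_eq_zero_of_ne h hd hne⟩
    simp only [Finset.notMem_empty, false_iff]
    rintro ⟨h1, h2, h3, -⟩
    exact hne (h.factor_unique h1 h2 h3 hd).1

/-- Every edge is obtained from a vertex by successively prepending edges of degree `e_i`. -/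
theorem IsProductSystem.induction_egen (h : IsProductSystem (posCone k) d src rng mul)
    {C : Λ → Prop} (h0 : ∀ v, d v = 1 → C v)
    (h1 : ∀ (i : Fin k) (a b : Λ), d a = egen k i → rng a = src b → C b → C (mul a b))
    (c : Λ) : C c := by
  suffices H : ∀ (n : ℕ) (c : Λ), ∑ i, (d c).toAdd i = n → C c by
    have hnn : 0 ≤ ∑ i, (d c).toAdd i := Finset.sum_nonneg fun i _ => h.d_mem c i
    exact H _ c (Int.toNat_of_nonneg hnn).symm
  intro n
  induction n with
  | zero =>
    intro c hc
    refine h0 c (Multiplicative.toAdd.injective ?_)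
    funext i
    exact (Finset.sum_eq_zero_iff_of_nonneg fun i _ => h.d_mem c i).1 (by simpa using hc) i
      (Finset.mem_univ i)
  | succ n ih =>
    intro c hc
    obtain ⟨i, hi⟩ : ∃ i, 0 < (d c).toAdd i := by
      by_contra! hcon
      have := Finset.sum_nonpos (s := Finset.univ) fun i _ => hcon i
      push_cast at hc
      omega
    have hsingle : ∀ j, (egen k i).toAdd j = if j = i then 1 else 0 := fun j => by
      simp [egen, Pi.single_apply]
    obtain ⟨⟨a, b⟩, ⟨f1, f2, f3, rfl⟩, -⟩ := h.factor (egen k i) ((egen k i)⁻¹ * d c)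
      (fun j => by rw [hsingle]; split_ifs <;> omega) (fun j => by
        have := h.d_mem c j
        simp only [toAdd_mul, toAdd_inv, Pi.add_apply, Pi.neg_apply, hsingle]
        split_ifs with hj
        · subst hj; omega
        · omega) c (by simp)
    simp only at f1 f2 f3 hc
    refine h1 i a b f1 f3 (ih b ?_)
    have hs : ∑ j, (egen k i).toAdd j = 1 := by simp [hsingle]
    simp only [h.d_mul a b f3, f1, toAdd_mul, Pi.add_apply, Finset.sum_add_distrib, hs] at hc
    push_cast at hc
    omega

/-- If relation (5) holds for edges of degree `e_i` against a class `C` of edges stable under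
passing to tails in minimal common extensions, then it holds for all edges against `C`. -/
theorem IsToeplitzFamily.nicaRel_of_egen (h : IsProductSystem (posCone k) d src rng mul)
    (hT : IsToeplitzFamily (posCone k) d src rng mul t) {C : Λ → Prop}
    (hC : ∀ (i : Fin k) (μ ν : Λ), d μ = egen k i → C ν →
      NicaRel d src rng mul t μ ν ∧ ∀ p ∈ extPairs d src rng mul μ ν, C p.1)
    (μ ν : Λ) (hν : C ν) : NicaRel d src rng mul t μ ν := by
  induction μ using h.induction_egen generalizing ν with
  | h0 v hv => exact hT.nicaRel_vertex h hv ν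
  | h1 i a b ha hab ih =>
    obtain ⟨h1, h2⟩ := hC i a ν ha hν
    exact hT.nicaRel_mul h hab h1 fun p hp => ih p.1 (h2 p hp)

end Toeplitz

/-- Lemma 8.2: over `ℕ^k`, a Toeplitz `E`-family satisfies relation (5) (and hence is a
Toeplitz–Cuntz–Krieger `E`-family) iff relation (5) holds for all pairs of edges of degrees
`e_i ≠ e_j` with common source. -/
theorem stmt13 {k : ℕ} {Λ : Type*}
    (d : Λ → Multiplicative (Fin k → ℤ)) (src rng : Λ → Λ) (mul : Λ → Λ → Λ)
    (hPS : IsProductSystem (posCone k) d src rng mul)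
    (hFA : FinitelyAligned (posCone k) d src rng mul)
    {B : Type*} [CStarAlgebra B] [PartialOrder B] [StarOrderedRing B]
    (t : Λ → B) (hT : IsToeplitzFamily (posCone k) d src rng mul t) :
    TCKrel (posCone k) d src rng mul t ↔
      (∀ i j : Fin k, i ≠ j → ∀ μ ν : Λ,
        d μ = egen k i → d ν = egen k j → src μ = src ν →
        ∀ M : Finset Λ, ↑M = MCE (posCone k) d src rng mul μ ν →
          star (t μ) * t ν =
            ∑ γ ∈ M, t (tail src rng mul μ γ) * star (t (tail src rng mul ν γ))) := by
  refine ⟨fun h _ _ _ μ ν _ _ _ => h μ ν, fun hgen => ?_⟩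
  have hbase : ∀ (i j : Fin k) (μ ν : Λ), d μ = egen k i → d ν = egen k j →
      NicaRel d src rng mul t μ ν := by
    intro i j μ ν hμ hν
    by_cases hij : i = j
    · exact hT.nicaRel_of_d_eq hPS (by rw [hμ, hν, hij])
    by_cases hs : src μ = src ν
    swap
    · exact hT.nicaRel_of_src_ne hPS hs
    have hS : ∀ p, p ∈ (hPS.finite_extPairs (hFA μ ν)).toFinset ↔
        p ∈ extPairs d src rng mul μ ν := fun p => Set.Finite.mem_toFinset _
    have hM : ↑(hFA μ ν).toFinset = MCE (posCone k) d src rng mul μ ν :=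
      Set.Finite.coe_toFinset _
    exact ⟨_, hS, (hgen i j hij μ ν hμ hν hs _ hM).trans (hPS.sum_MCE_eq hM hS)⟩
  have hsmall : ∀ μ ν : Λ, (d ν = 1 ∨ ∃ j, d ν = egen k j) → NicaRel d src rng mul t μ ν := by
    refine hT.nicaRel_of_egen hPS fun i μ ν hμ hν => ⟨?_, ?_⟩
    · rcases hν with hν | ⟨j, hν⟩
      · exact (hT.nicaRel_vertex hPS hν μ).symm
      · exact hbase i j μ ν hμ hν
    · rintro ⟨α, β⟩ ⟨h1, -, -, h4⟩
      simp only [hPS.d_mul _ _ h1, hμ, toAdd_mul, Pi.add_apply] at h4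
      have hsingle : ∀ i j : Fin k, (egen k i).toAdd j = if j = i then 1 else 0 :=
        fun i j => by simp [egen, Pi.single_apply]
      by_cases hcase : ∃ j, j ≠ i ∧ d ν = egen k j
      · obtain ⟨j, hji, hj⟩ := hcase
        refine Or.inr ⟨j, Multiplicative.toAdd.injective (funext fun l => ?_)⟩
        have := h4 l
        simp only [hj, hsingle] at this ⊢
        split_ifs at this ⊢ <;> omega
      · refine Or.inl (Multiplicative.toAdd.injective (funext fun l => ?_))
        have := h4 l
        rcases hν with hν | ⟨j, hν⟩
        · simp only [hν, hsingle, toAdd_one, Pi.zero_apply] at this ⊢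
          split_ifs at this <;> omega
        · obtain rfl : j = i := by
            by_contra hji
            exact hcase ⟨j, hji, hν⟩
          simp only [hν, toAdd_one, Pi.zero_apply] at this ⊢
          omega
  have hall : ∀ μ ν : Λ, NicaRel d src rng mul t μ ν := fun μ ν =>
    hT.nicaRel_of_egen hPS (C := fun _ => True) (fun i μ ν hμ _ =>
      ⟨(hsmall ν μ (Or.inr ⟨i, hμ⟩)).symm, fun _ _ => trivial⟩) μ ν trivial
  intro μ ν M hM
  obtain ⟨S, hS, hs⟩ := hall μ ν
  rw [hs, hPS.sum_MCE_eq hM hS]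

end PSG
end
end

section
/- Let (E,φ) be a finitely aligned product system of graphs over ℕ^k and {t_λ : λ ∈ E¹} a Toeplitz–Cuntz–Krieger E-family in a C*-algebra B. Then {t_λ} satisfies condition (†) if and only if for every v ∈ E⁰ and every choice of finite sets G_m ⊆ s_{e_m}⁻¹(v) (1 ≤ m ≤ k), the element ∏_{m=1}^k (t_v − ∑_{λ∈G_m} t_λ t_λ*) of B is nonzero. -/
open scoped Classical

noncomputable section

namespace PSG

lemma tail_spec {Λ : Type*} {src rng : Λ → Λ} {mul : Λ → Λ → Λ} {a c : Λ}
    (h : IsInit src rng mul a c) :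
    rng a = src (tail src rng mul a c) ∧ mul a (tail src rng mul a c) = c := by
  rw [tail, dif_pos h]
  exact h.choose_spec

section

variable {G : Type*} [Group G] {Λ : Type*} {P : Submonoid G} {d : Λ → G} {src rng : Λ → Λ}
  {mul : Λ → Λ → Λ}

lemma IsProductSystem.eq_of_isInit_of_d_eq (hPS : IsProductSystem P d src rng mul) {a c : Λ}
    (h : IsInit src rng mul a c) (hd : d c = d a) : c = a := by
  obtain ⟨b, hab, rfl⟩ := h
  rw [hPS.d_mul a b hab, mul_eq_left] at hd
  rw [hPS.src_vertex b hd] at hab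
  rw [← hab, hPS.mul_rng_self]

lemma MCE_comm (P : Submonoid G) (d : Λ → G) (src rng : Λ → Λ) (mul : Λ → Λ → Λ) (μ ν : Λ) :
    MCE P d src rng mul μ ν = MCE P d src rng mul ν μ := by
  ext γ
  simp only [MCE, IsLUB2, IsUB, Set.mem_ofPred_eq]
  constructor <;> rintro ⟨h₁, h₂, ⟨h₃, h₄, h₅⟩, h₆⟩ <;>
    exact ⟨h₂, h₁, ⟨h₃, h₅, h₄⟩, fun r hr => h₆ r ⟨hr.1, hr.2.2, hr.2.1⟩⟩

lemma MCE_eq_empty_of_d_eq (hPS : IsProductSystem P d src rng mul)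
    (hP : ∀ g ∈ P, g⁻¹ ∈ P → g = 1) {μ ν : Λ} (hd : d μ = d ν) (hne : μ ≠ ν) :
    MCE P d src rng mul μ ν = ∅ := by
  refine Set.eq_empty_of_forall_notMem fun γ ⟨hμ, hν, ⟨_, hle, _⟩, hleast⟩ => hne ?_
  have hself : ∀ g : G, qle P g g := fun g => by simp [qle, P.one_mem]
  have hge : qle P (d γ) (d μ) := hleast _ ⟨hPS.d_mem μ, hself _, hd ▸ hself _⟩
  have hγ : d γ = d μ := by
    have h := hP _ hle (by simpa [qle] using hge)
    exact (inv_mul_eq_one.mp h).symm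
  rw [← hPS.eq_of_isInit_of_d_eq hμ hγ, hPS.eq_of_isInit_of_d_eq hν (hγ.trans hd)]

variable {B : Type*} [CStarAlgebra B] [PartialOrder B] {t : Λ → B}

lemma IsTCKFamily.star_mul_eq_zero (hT : IsTCKFamily P d src rng mul t)
    (hPS : IsProductSystem P d src rng mul) (hP : ∀ g ∈ P, g⁻¹ ∈ P → g = 1) {μ ν : Λ}
    (hd : d μ = d ν) (hne : μ ≠ ν) : star (t μ) * t ν = 0 := by
  rw [hT.2 μ ν ∅ (by simp [MCE_eq_empty_of_d_eq hPS hP hd hne]), Finset.sum_empty]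

lemma IsTCKFamily.range_mul_range (hT : IsTCKFamily P d src rng mul t) {μ ν : Λ} {M : Finset Λ}
    (hM : ↑M = MCE P d src rng mul μ ν) :
    t μ * star (t μ) * (t ν * star (t ν)) = ∑ γ ∈ M, t γ * star (t γ) := by
  have h : t μ * star (t μ) * (t ν * star (t ν)) = t μ * (star (t μ) * t ν) * star (t ν) := by
    simp only [mul_assoc]
  rw [h, hT.2 μ ν M hM, Finset.mul_sum, Finset.sum_mul]
  refine Finset.sum_congr rfl fun γ hγ => ?_
  have hmem : γ ∈ MCE P d src rng mul μ ν := hM ▸ Finset.mem_coe.mpr hγ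
  obtain ⟨hμ, hμγ⟩ := tail_spec hmem.1
  obtain ⟨hν, hνγ⟩ := tail_spec hmem.2.1
  rw [← mul_assoc, hT.1.mul_eq _ _ hμ, mul_assoc, ← star_mul, hT.1.mul_eq _ _ hν, hμγ, hνγ]

lemma IsTCKFamily.commute_range (hT : IsTCKFamily P d src rng mul t)
    (hFA : FinitelyAligned P d src rng mul) (μ ν : Λ) :
    Commute (t μ * star (t μ)) (t ν * star (t ν)) := by
  have hM : ((hFA μ ν).toFinset : Set Λ) = MCE P d src rng mul μ ν := by simp
  rw [Commute, SemiconjBy, hT.range_mul_range hM,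
    hT.range_mul_range (hM.trans (MCE_comm P d src rng mul μ ν))]

lemma IsToeplitzFamily.vertex_mul (hT : IsToeplitzFamily P d src rng mul t)
    (hPS : IsProductSystem P d src rng mul) (a : Λ) : t (src a) * t a = t a := by
  rw [hT.mul_eq _ _ (hPS.rng_vertex _ (hPS.d_src a)), hPS.src_mul_self]

/-- The gap projection `t_v − ∑_{a ∈ F} t_a t_a*`. -/
def gap (t : Λ → B) (v : Λ) (F : Finset Λ) : B := t v - ∑ a ∈ F, t a * star (t a)

lemma IsToeplitzFamily.vertex_mul_gap (hT : IsToeplitzFamily P d src rng mul t)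
    (hPS : IsProductSystem P d src rng mul) {v : Λ} (hv : d v = 1) {F : Finset Λ}
    (hF : ∀ a ∈ F, src a = v) : t v * gap t v F = gap t v F := by
  rw [gap, mul_sub, hT.vertex_idem v hv, Finset.mul_sum]
  congr 1
  refine Finset.sum_congr rfl fun a ha => ?_
  rw [← mul_assoc, ← hF a ha, hT.vertex_mul hPS]

lemma IsTCKFamily.commute_gap (hT : IsTCKFamily P d src rng mul t)
    (hFA : FinitelyAligned P d src rng mul) {v : Λ} (hv : d v = 1) (F F' : Finset Λ) :
    Commute (gap t v F) (gap t v F') := by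
  have hvv : t v = t v * star (t v) := by
    rw [(hT.1.vertex_sa v hv).star_eq, hT.1.vertex_idem v hv]
  have hcomm : ∀ (x : B) (F : Finset Λ), (∀ a, Commute x (t a * star (t a))) →
      Commute x (gap t v F) := fun x F hx =>
    (hvv ▸ hx v : Commute x (t v)).sub_right (Commute.sum_right _ _ _ fun a _ => hx a)
  exact hcomm _ _ fun a => (hcomm _ _ fun b => hT.commute_range hFA a b).symm

lemma IsTCKFamily.star_mul_gap_eq_zero (hT : IsTCKFamily P d src rng mul t)
    (hPS : IsProductSystem P d src rng mul) (hP : ∀ g ∈ P, g⁻¹ ∈ P → g = 1) {v : Λ}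
    (hv : d v = 1) {p : G} {F : Finset Λ} (hF : ∀ a ∈ F, d a = p ∧ src a = v) {a c : Λ}
    (ha : a ∈ F) (hac : IsInit src rng mul a c) : star (t c) * gap t v F = 0 := by
  obtain ⟨b, hab, rfl⟩ := hac
  have hav : star (t a) * t v = star (t a) := by
    have h := congrArg star (hT.1.vertex_mul hPS a)
    rwa [star_mul, (hF a ha).2, (hT.1.vertex_sa v hv).star_eq] at h
  have hsum : star (t a) * ∑ b ∈ F, t b * star (t b) = star (t a) := by
    rw [Finset.mul_sum, Finset.sum_eq_single_of_mem a ha]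
    · have h := congrArg star (hT.1.mul_eq _ _ (hPS.src_vertex _ (hPS.d_rng a)).symm)
      rw [hPS.mul_rng_self, star_mul, (hT.1.vertex_sa _ (hPS.d_rng a)).star_eq] at h
      rw [← mul_assoc, hT.1.star_mul_self, h]
    · intro b hb hba
      rw [← mul_assoc, hT.star_mul_eq_zero hPS hP ((hF a ha).1.trans (hF b hb).1.symm) hba.symm,
        zero_mul]
  rw [← hT.1.mul_eq _ _ hab, star_mul, mul_assoc, gap, mul_sub, hav, hsum, sub_self, mul_zero]

/-- If every element of `F` extends an element of `F'`, then `gap t v F'` is dominated by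
`gap t v F`. -/
lemma IsTCKFamily.gap_mul_gap (hT : IsTCKFamily P d src rng mul t)
    (hPS : IsProductSystem P d src rng mul) (hP : ∀ g ∈ P, g⁻¹ ∈ P → g = 1) {v : Λ}
    (hv : d v = 1) {p : G} {F F' : Finset Λ} (hF' : ∀ a ∈ F', d a = p ∧ src a = v)
    (h : ∀ c ∈ F, ∃ a ∈ F', IsInit src rng mul a c) :
    gap t v F * gap t v F' = gap t v F' := by
  rw [gap, sub_mul, hT.1.vertex_mul_gap hPS hv fun a ha => (hF' a ha).2, Finset.sum_mul,
    Finset.sum_eq_zero, sub_zero]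
  intro c hc
  obtain ⟨a, ha, hac⟩ := h c hc
  rw [mul_assoc, hT.star_mul_gap_eq_zero hPS hP hv hF' ha hac, mul_zero]

end

lemma eq_one_of_mem_posCone {k : ℕ} (g : Multiplicative (Fin k → ℤ)) (hg : g ∈ posCone k)
    (hg' : g⁻¹ ∈ posCone k) : g = 1 := by
  refine Multiplicative.toAdd.injective (funext fun i => ?_)
  have h₁ : 0 ≤ g.toAdd i := hg i
  have h₂ : 0 ≤ -(g.toAdd i) := hg' i
  simp only [toAdd_one, Pi.zero_apply]
  lia

lemma egen_mem_posCone (k : ℕ) (i : Fin k) : egen k i ∈ posCone k := by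
  intro j
  by_cases h : j = i <;> simp [egen, h]

lemma egen_injective (k : ℕ) : Function.Injective (egen k) := by
  intro i j h
  by_contra hne
  have h' := congrFun (congrArg Multiplicative.toAdd h) i
  simp [egen, hne] at h'

lemma egen_ne_one (k : ℕ) (i : Fin k) : egen k i ≠ 1 := by
  intro h
  have h' := congrFun (congrArg Multiplicative.toAdd h) i
  simp [egen] at h'

lemma exists_egen_qle {k : ℕ} {p : Multiplicative (Fin k → ℤ)} (hp : p ∈ posCone k)
    (hp1 : p ≠ 1) : ∃ m, qle (posCone k) (egen k m) p := by
  obtain ⟨m, hm⟩ : ∃ m, p.toAdd m ≠ 0 := by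
    by_contra! h
    exact hp1 (Multiplicative.toAdd.injective (funext h))
  refine ⟨m, fun j => ?_⟩
  have hj : 0 ≤ p.toAdd j := hp j
  by_cases h : j = m
  · subst h
    simp [egen]
    lia
  · simpa [egen, h] using hj

lemma IsProductSystem.exists_isInit {G Λ : Type*} [Group G] {P : Submonoid G} {d : Λ → G}
    {src rng : Λ → Λ} {mul : Λ → Λ → Λ} (hPS : IsProductSystem P d src rng mul) {p : G}
    (hp : p ∈ P) {c : Λ} (hc : qle P p (d c)) :
    ∃ a, d a = p ∧ src a = src c ∧ IsInit src rng mul a c := by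
  obtain ⟨⟨a, b⟩, ⟨ha, -, hab, rfl⟩, -⟩ := hPS.factor p (p⁻¹ * d c) hp hc c (by simp)
  exact ⟨a, ha, (hPS.src_mul a b hab).symm, b, hab, rfl⟩

lemma exists_finset_egen_isInit {k : ℕ} {Λ : Type*} {d : Λ → Multiplicative (Fin k → ℤ)}
    {src rng : Λ → Λ} {mul : Λ → Λ → Λ} (hPS : IsProductSystem (posCone k) d src rng mul)
    {v : Λ} (S : Finset Λ) (hS : ∀ a ∈ S, src a = v) (m : Fin k) :
    ∃ F : Finset Λ, (∀ a ∈ F, d a = egen k m ∧ src a = v) ∧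
      ∀ c ∈ S, qle (posCone k) (egen k m) (d c) → ∃ a ∈ F, IsInit src rng mul a c := by
  choose! f hfd hfs hfi using fun (c : Λ) (hc : qle (posCone k) (egen k m) (d c)) =>
    hPS.exists_isInit (egen_mem_posCone k m) hc
  refine ⟨(S.filter fun c => qle (posCone k) (egen k m) (d c)).image f, fun a ha => ?_,
    fun c hc hmc => ⟨f c, ?_, hfi c hmc⟩⟩
  · obtain ⟨c, hc, rfl⟩ := Finset.mem_image.mp ha
    obtain ⟨hcS, hmc⟩ := Finset.mem_filter.mp hc
    exact ⟨hfd c hmc, (hfs c hmc).trans (hS c hcS)⟩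
  · exact Finset.mem_image_of_mem f (Finset.mem_filter.mpr ⟨hc, hmc⟩)

lemma list_prod_mul_eq_self {M : Type*} [Monoid M] {x : M} {l : List M}
    (h : ∀ a ∈ l, a * x = x) : l.prod * x = x := by
  induction l with
  | nil => simp
  | cons a l ih =>
    rw [List.prod_cons, mul_assoc, ih fun b hb => h b (List.mem_cons_of_mem a hb),
      h a List.mem_cons_self]

/-- Lemma 8.3: over `ℕ^k`, condition (†) holds iff it holds with `R = {e_1, …, e_k}`, i.e.
`∏_{m=1}^k (t_v − ∑_{λ∈G_m} t_λ t_λ*) ≠ 0` for all finite `G_m ⊆ s_{e_m}⁻¹(v)`. -/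
theorem stmt14 {k : ℕ} {Λ : Type*}
    (d : Λ → Multiplicative (Fin k → ℤ)) (src rng : Λ → Λ) (mul : Λ → Λ → Λ)
    (hPS : IsProductSystem (posCone k) d src rng mul)
    (hFA : FinitelyAligned (posCone k) d src rng mul)
    {B : Type*} [CStarAlgebra B] [PartialOrder B] [StarOrderedRing B]
    (t : Λ → B) (hT : IsTCKFamily (posCone k) d src rng mul t) :
    Dagger (posCone k) d src t ↔
      (∀ v, d v = 1 → ∀ Gm : Fin k → Finset Λ,
        (∀ m : Fin k, ∀ a ∈ Gm m, d a = egen k m ∧ src a = v) →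
        (List.ofFn fun m : Fin k =>
          t v - ∑ a ∈ Gm m, t a * star (t a)).prod ≠ 0) := by
  constructor
  · intro hD v hv Gm hGm
    have h := hD (List.ofFn (egen k)) (List.nodup_ofFn.mpr (egen_injective k))
      (by
        intro p hp
        obtain ⟨m, rfl⟩ := List.mem_ofFn.mp hp
        exact ⟨egen_mem_posCone k m, egen_ne_one k m⟩)
      v hv (Function.extend (egen k) Gm fun _ => ∅)
      (by
        intro p hp
        obtain ⟨m, rfl⟩ := List.mem_ofFn.mp hp
        rw [(egen_injective k).extend_apply]
        exact hGm m)
    simpa only [List.map_ofFn, Function.comp_def, (egen_injective k).extend_apply] using h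
  · intro hG R _ hR v hv Fp hFp hzero
    choose Gm hGm hGmR using exists_finset_egen_isInit hPS (R.toFinset.biUnion Fp)
      (v := v) fun a ha => by
        obtain ⟨p, hp, hap⟩ := Finset.mem_biUnion.mp ha
        exact (hFp p (List.mem_toFinset.mp hp) a hap).2
    refine hG v hv Gm hGm ?_
    change (List.ofFn fun m => gap t v (Gm m)).prod = 0
    change (R.map fun p => gap t v (Fp p)).prod = 0 at hzero
    suffices h : ∀ x ∈ R.map fun p => gap t v (Fp p),
        x * (List.ofFn fun m => gap t v (Gm m)).prod = (List.ofFn fun m => gap t v (Gm m)).prod by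
      rw [← list_prod_mul_eq_self h, hzero, zero_mul]
    intro x hx
    obtain ⟨p, hp, rfl⟩ := List.mem_map.mp hx
    obtain ⟨m, hm⟩ := exists_egen_qle (hR p hp).1 (hR p hp).2
    rw [← List.prod_erase_of_comm (a := gap t v (Gm m)) (List.mem_ofFn.mpr ⟨m, rfl⟩),
      ← mul_assoc, hT.gap_mul_gap hPS eq_one_of_mem_posCone hv (hGm m)]
    · intro c hc
      refine hGmR m c (Finset.mem_biUnion.mpr ⟨p, List.mem_toFinset.mpr hp, hc⟩) ?_
      rwa [(hFp p hp c hc).1]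
    · intro x hx y hy
      obtain ⟨i, rfl⟩ := List.mem_ofFn.mp hx
      obtain ⟨j, rfl⟩ := List.mem_ofFn.mp hy
      exact hT.commute_gap hFA hv _ _

end PSG
end
end

section
/- Let (E,φ) be a product system of graphs over a semigroup P with identity e. For p ∈ P let X(E_p) be the set of functions x : E¹_p → ℂ such that v ↦ ∑_{λ∈E¹_p, r(λ)=v} |x(λ)|² vanishes at infinity on E⁰ (tends to 0 along the cofinite filter), with C₀(E⁰)-valued inner product ⟨x,y⟩(v) := ∑_{λ∈E¹_p, r(λ)=v} conj(x(λ)) y(λ). For x ∈ X(E_p) and y ∈ X(E_q) define xy : E¹_{pq} → ℂ by (xy)(γ) := x(γ(e,p)) y(γ(p,pq)). Then: (1) xy ∈ X(E_{pq}); (2) the multiplication is bilinear and associative, and δ_λ δ_μ = δ_{λμ} if r(λ) = s(μ) and δ_λ δ_μ = 0 otherwise, where δ_λ denotes the point mass at λ; (3) for all x,x' ∈ X(E_p), y,y' ∈ X(E_q) and v ∈ E⁰, ⟨xy, x'y'⟩(v) = ⟨⟨x',x⟩·y, y'⟩(v), where (a·y)(μ) := a(s(μ)) y(μ) for a function a on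 E⁰. -/
open scoped Classical

noncomputable section

namespace PSG

variable {G : Type*} [Group G] {Λ : Type*}

/-- Membership in the Cuntz–Krieger bimodule `X(E_p)`: functions supported on edges of degree
`p` whose fibrewise ℓ²-norms are finite and vanish at infinity on the vertex set. -/
def CKmem (d : Λ → G) (rng : Λ → Λ) (p : G) (x : Λ → ℂ) : Prop :=
  (∀ a, x a ≠ 0 → d a = p) ∧
  (∀ v, d v = 1 →
    Summable fun a : {a : Λ // d a = p ∧ rng a = v} => ‖x a.1‖ ^ 2) ∧
  Filter.Tendsto (fun v : {v : Λ // d v = 1} =>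
      ∑' a : {a : Λ // d a = p ∧ rng a = v.1}, ‖x a.1‖ ^ 2)
    Filter.cofinite (nhds 0)

/-- The initial factor `γ(e,p)` of degree `p` of an edge `γ` (junk value if none exists). -/
def fac1 (d : Λ → G) (src rng : Λ → Λ) (mul : Λ → Λ → Λ) (p : G) (c : Λ) : Λ :=
  if h : ∃ ab : Λ × Λ, d ab.1 = p ∧ rng ab.1 = src ab.2 ∧ mul ab.1 ab.2 = c
  then h.choose.1 else c

/-- The final factor `γ(p, d(γ))` complementary to the initial factor of degree `p`. -/
def fac2 (d : Λ → G) (src rng : Λ → Λ) (mul : Λ → Λ → Λ) (p : G) (c : Λ) : Λ :=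
  if h : ∃ ab : Λ × Λ, d ab.1 = p ∧ rng ab.1 = src ab.2 ∧ mul ab.1 ab.2 = c
  then h.choose.2 else c

/-- The multiplication `X(E_p) × X(E_q) → X(E_{pq})`: `(xy)(γ) = x(γ(e,p)) y(γ(p,pq))`. -/
def ckmul (d : Λ → G) (src rng : Λ → Λ) (mul : Λ → Λ → Λ)
    (p q : G) (x y : Λ → ℂ) : Λ → ℂ :=
  fun c => if d c = p * q then
    x (fac1 d src rng mul p c) * y (fac2 d src rng mul p c) else 0

/-- The `C₀(E⁰)`-valued inner product on `X(E_p)`: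
`⟨x,y⟩(v) = ∑_{d(a)=p, r(a)=v} conj (x a) * y a`. -/
def ckInner (d : Λ → G) (rng : Λ → Λ) (p : G) (x y : Λ → ℂ) : Λ → ℂ :=
  fun v => ∑' a : {a : Λ // d a = p ∧ rng a = v}, (starRingEnd ℂ) (x a.1) * y a.1

section Factorisation

variable {P : Submonoid G} {d : Λ → G} {src rng : Λ → Λ} {mul : Λ → Λ → Λ} {p q : G}

theorem IsProductSystem.exists_mul_eq (hPS : IsProductSystem P d src rng mul)
    (hp : p ∈ P) (hq : q ∈ P) {c : Λ} (hc : d c = p * q) :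
    ∃ a b, d a = p ∧ d b = q ∧ rng a = src b ∧ mul a b = c := by
  obtain ⟨⟨a, b⟩, h, -⟩ := hPS.factor p q hp hq c hc
  exact ⟨a, b, h⟩

theorem IsProductSystem.mul_inj (hPS : IsProductSystem P d src rng mul) {a b a' b' : Λ}
    (h : rng a = src b) (h' : rng a' = src b') (hd : d a' = d a)
    (hm : mul a' b' = mul a b) : a' = a ∧ b' = b := by
  have hd' : d b' = d b := by
    have := hPS.d_mul a' b' h'
    rw [hm, hPS.d_mul a b h, hd] at this
    exact (mul_left_cancel this).symm
  have := (hPS.factor (d a) (d b) (hPS.d_mem a) (hPS.d_mem b) (mul a b)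
    (hPS.d_mul a b h)).unique (y₁ := (a', b')) (y₂ := (a, b))
    ⟨hd, hd', h', hm⟩ ⟨rfl, rfl, h, rfl⟩
  exact Prod.ext_iff.mp this

theorem IsProductSystem.fac_mul (hPS : IsProductSystem P d src rng mul) {a b : Λ}
    (h : rng a = src b) :
    fac1 d src rng mul (d a) (mul a b) = a ∧ fac2 d src rng mul (d a) (mul a b) = b := by
  have hex : ∃ ab : Λ × Λ, d ab.1 = d a ∧ rng ab.1 = src ab.2 ∧ mul ab.1 ab.2 = mul a b :=
    ⟨(a, b), rfl, h, rfl⟩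
  rw [fac1, fac2, dif_pos hex, dif_pos hex]
  obtain ⟨h₁, h₂, h₃⟩ := hex.choose_spec
  exact hPS.mul_inj h h₂ h₁ h₃

theorem IsProductSystem.ckmul_mul (hPS : IsProductSystem P d src rng mul) {a b : Λ}
    (ha : d a = p) (hb : d b = q) (h : rng a = src b) (x y : Λ → ℂ) :
    ckmul d src rng mul p q x y (mul a b) = x a * y b := by
  subst ha hb
  simp only [ckmul, if_pos (hPS.d_mul a b h), (hPS.fac_mul h).1, (hPS.fac_mul h).2]

theorem ckmul_of_ne {c : Λ} (hc : d c ≠ p * q) (x y : Λ → ℂ) :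
    ckmul d src rng mul p q x y c = 0 := if_neg hc

/-- Edges of degree `p * q` with range `v` correspond to composable pairs of edges of degrees
`p` and `q`, the second of which has range `v`. -/
def IsProductSystem.fiberEquiv (hPS : IsProductSystem P d src rng mul)
    (hp : p ∈ P) (hq : q ∈ P) (v : Λ) :
    (Σ b : {b : Λ // d b = q ∧ rng b = v}, {a : Λ // d a = p ∧ rng a = src b.1}) ≃
      {c : Λ // d c = p * q ∧ rng c = v} :=
  Equiv.ofBijective
    (fun s => ⟨mul s.2.1 s.1.1,
      by rw [hPS.d_mul _ _ s.2.2.2, s.2.2.1, s.1.2.1],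
      by rw [hPS.rng_mul _ _ s.2.2.2, s.1.2.2]⟩) <| by
    constructor
    · rintro ⟨⟨b, hb⟩, ⟨a, ha⟩⟩ ⟨⟨b', hb'⟩, ⟨a', ha'⟩⟩ h
      obtain ⟨rfl, rfl⟩ := hPS.mul_inj ha'.2 ha.2 (ha.1.trans ha'.1.symm)
        (congrArg Subtype.val h)
      rfl
    · rintro ⟨c, hc, hv⟩
      obtain ⟨a, b, ha, hb, h, rfl⟩ := hPS.exists_mul_eq hp hq hc
      exact ⟨⟨⟨b, hb, (hPS.rng_mul a b h).symm.trans hv⟩, ⟨a, ha, h⟩⟩, rfl⟩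

theorem IsProductSystem.ckmul_fiberEquiv (hPS : IsProductSystem P d src rng mul)
    (hp : p ∈ P) (hq : q ∈ P) (v : Λ) (x y : Λ → ℂ)
    (s : Σ b : {b : Λ // d b = q ∧ rng b = v}, {a : Λ // d a = p ∧ rng a = src b.1}) :
    ckmul d src rng mul p q x y (hPS.fiberEquiv hp hq v s).1 = x s.2.1 * y s.1.1 :=
  hPS.ckmul_mul s.2.2.1 s.1.2.1 s.2.2.2 x y

theorem CKmem.exists_bound {x : Λ → ℂ} (hx : CKmem d rng p x) :
    ∃ M : ℝ, ∀ v, d v = 1 → ∑' a : {a : Λ // d a = p ∧ rng a = v}, ‖x a.1‖ ^ 2 ≤ M := by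
  obtain ⟨M, hM⟩ := hx.2.2.bddAbove_range_of_cofinite
  exact ⟨M, fun v hv => hM ⟨⟨v, hv⟩, rfl⟩⟩

theorem IsProductSystem.summable_sigma_norm_sq (hPS : IsProductSystem P d src rng mul)
    {x y : Λ → ℂ} (hx : CKmem d rng p x) (hy : CKmem d rng q y) {v : Λ} (hv : d v = 1) :
    Summable fun s : Σ b : {b : Λ // d b = q ∧ rng b = v},
      {a : Λ // d a = p ∧ rng a = src b.1} => ‖x s.2.1‖ ^ 2 * ‖y s.1.1‖ ^ 2 := by
  obtain ⟨M, hM⟩ := hx.exists_bound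
  refine (summable_sigma_of_nonneg fun _ => by positivity).mpr
    ⟨fun b => (hx.2.1 (src b.1) (hPS.d_src b.1)).mul_right (‖y b.1‖ ^ 2), ?_⟩
  simp only [tsum_mul_right]
  exact .of_nonneg_of_le
    (fun b => mul_nonneg (tsum_nonneg fun _ => sq_nonneg _) (sq_nonneg _))
    (fun b => mul_le_mul_of_nonneg_right (hM _ (hPS.d_src b.1)) (sq_nonneg _))
    ((hy.2.1 v hv).mul_left M)

theorem IsProductSystem.summable_ckmul_norm_sq (hPS : IsProductSystem P d src rng mul)
    (hp : p ∈ P) (hq : q ∈ P) {x y : Λ → ℂ} (hx : CKmem d rng p x) (hy : CKmem d rng q y)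
    {v : Λ} (hv : d v = 1) :
    Summable fun c : {c : Λ // d c = p * q ∧ rng c = v} =>
      ‖ckmul d src rng mul p q x y c.1‖ ^ 2 := by
  rw [← (hPS.fiberEquiv hp hq v).summable_iff]
  refine (hPS.summable_sigma_norm_sq hx hy hv).congr fun s => ?_
  rw [Function.comp_apply, hPS.ckmul_fiberEquiv, norm_mul, mul_pow]

theorem IsProductSystem.ckmem_ckmul (hPS : IsProductSystem P d src rng mul)
    (hp : p ∈ P) (hq : q ∈ P) {x y : Λ → ℂ} (hx : CKmem d rng p x) (hy : CKmem d rng q y) :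
    CKmem d rng (p * q) (ckmul d src rng mul p q x y) := by
  refine ⟨fun c hc => ?_, fun v hv => hPS.summable_ckmul_norm_sq hp hq hx hy hv, ?_⟩
  · by_contra h
    exact hc (ckmul_of_ne h x y)
  · obtain ⟨M, hM⟩ := hx.exists_bound
    refine squeeze_zero (fun v => tsum_nonneg fun _ => by positivity) (fun v => ?_)
      (by simpa using hy.2.2.const_mul M)
    have hs := hPS.summable_sigma_norm_sq hx hy v.2
    rw [← (hPS.fiberEquiv hp hq v.1).tsum_eq]
    simp only [hPS.ckmul_fiberEquiv, norm_mul, mul_pow]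
    rw [hs.tsum_sigma, ← tsum_mul_left]
    refine hs.sigma.tsum_le_tsum (fun b => ?_) ((hy.2.1 v.1 v.2).mul_left M)
    dsimp only
    rw [tsum_mul_right]
    exact mul_le_mul_of_nonneg_right (hM _ (hPS.d_src b.1)) (by positivity)

theorem summable_conj_mul {ι : Type*} {f g : ι → ℂ} (hf : Summable fun i => ‖f i‖ ^ 2)
    (hg : Summable fun i => ‖g i‖ ^ 2) :
    Summable fun i => (starRingEnd ℂ) (f i) * g i := by
  refine .of_norm_bounded (hf.add hg) fun i => ?_
  rw [norm_mul, RCLike.norm_conj]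
  nlinarith [sq_nonneg (‖f i‖ - ‖g i‖), sq_nonneg ‖f i‖, sq_nonneg ‖g i‖]

theorem IsProductSystem.ckInner_ckmul (hPS : IsProductSystem P d src rng mul)
    (hp : p ∈ P) (hq : q ∈ P) {x x' y y' : Λ → ℂ} (hx : CKmem d rng p x)
    (hx' : CKmem d rng p x') (hy : CKmem d rng q y) (hy' : CKmem d rng q y')
    {v : Λ} (hv : d v = 1) :
    ckInner d rng (p * q) (ckmul d src rng mul p q x y) (ckmul d src rng mul p q x' y') v =
      ckInner d rng q (fun μ => ckInner d rng p x' x (src μ) * y μ) y' v := by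
  have hs := summable_conj_mul (hPS.summable_ckmul_norm_sq hp hq hx hy hv)
    (hPS.summable_ckmul_norm_sq hp hq hx' hy' hv)
  rw [← (hPS.fiberEquiv hp hq v).summable_iff] at hs
  unfold ckInner
  rw [← (hPS.fiberEquiv hp hq v).tsum_eq]
  refine hs.tsum_sigma.trans (tsum_congr fun b => ?_)
  simp only [Function.comp_apply, hPS.ckmul_fiberEquiv]
  rw [map_mul, Complex.conj_tsum, mul_assoc, ← tsum_mul_right]
  refine tsum_congr fun a => ?_
  simp only [map_mul, Complex.conj_conj]
  ring

theorem IsProductSystem.ckmul_assoc (hPS : IsProductSystem P d src rng mul)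
    (hp : p ∈ P) (hq : q ∈ P) {r : G} (hr : r ∈ P) (x y z : Λ → ℂ) :
    ckmul d src rng mul (p * q) r (ckmul d src rng mul p q x y) z =
      ckmul d src rng mul p (q * r) x (ckmul d src rng mul q r y z) := by
  funext c
  by_cases hc : d c = p * q * r
  · obtain ⟨e, c, he, hdc, hec, rfl⟩ := hPS.exists_mul_eq (P.mul_mem hp hq) hr hc
    obtain ⟨a, b, ha, hb, hab, rfl⟩ := hPS.exists_mul_eq hp hq he
    have hbc : rng b = src c := (hPS.rng_mul a b hab).symm.trans hec
    rw [hPS.ckmul_mul he hdc hec, hPS.ckmul_mul ha hb hab, hPS.mul_assoc' a b c hab hbc,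
      hPS.ckmul_mul ha (by rw [hPS.d_mul b c hbc, hb, hdc])
        (hab.trans (hPS.src_mul b c hbc).symm), hPS.ckmul_mul hb hdc hbc, mul_assoc]
  · rw [ckmul_of_ne hc, ckmul_of_ne (by rwa [← mul_assoc])]

theorem IsProductSystem.ckmul_pointMass (hPS : IsProductSystem P d src rng mul)
    (hp : p ∈ P) (hq : q ∈ P) {a b : Λ} (ha : d a = p) (hb : d b = q) :
    ckmul d src rng mul p q
        (fun c => if c = a then (1 : ℂ) else 0) (fun c => if c = b then (1 : ℂ) else 0) =
      if rng a = src b then (fun c => if c = mul a b then (1 : ℂ) else 0) else 0 := by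
  funext c
  by_cases hc : d c = p * q
  · obtain ⟨a', b', ha', hb', h', rfl⟩ := hPS.exists_mul_eq hp hq hc
    rw [hPS.ckmul_mul ha' hb' h', ite_apply, Pi.zero_apply]
    split_ifs <;>
      grind [hPS.mul_inj (a := a) (b := b) (a' := a') (b' := b')]
  · rw [ckmul_of_ne hc]
    split_ifs with h
    · exact (if_neg fun hm => hc (by rw [hm, hPS.d_mul a b h, ha, hb])).symm
    · rfl

end Factorisation

/-- Proposition 3.2 / Corollary 3.4: the multiplication on the Cuntz–Krieger bimodules of a
product system of graphs: it maps `X(E_p) × X(E_q)` to `X(E_{pq})`, is bilinear and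
associative, acts as expected on point masses, and is compatible with the inner products. -/
theorem stmt18 (P : Submonoid G)
    (d : Λ → G) (src rng : Λ → Λ) (mul : Λ → Λ → Λ)
    (hPS : IsProductSystem P d src rng mul)
    (p q : G) (hp : p ∈ P) (hq : q ∈ P) :
    (∀ x y : Λ → ℂ, CKmem d rng p x → CKmem d rng q y →
      CKmem d rng (p * q) (ckmul d src rng mul p q x y)) ∧
    (∀ x x' y : Λ → ℂ, ckmul d src rng mul p q (x + x') y =
      ckmul d src rng mul p q x y + ckmul d src rng mul p q x' y) ∧
    (∀ x y y' : Λ → ℂ, ckmul d src rng mul p q x (y + y') =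
      ckmul d src rng mul p q x y + ckmul d src rng mul p q x y') ∧
    (∀ (c : ℂ) (x y : Λ → ℂ), ckmul d src rng mul p q (c • x) y =
        c • ckmul d src rng mul p q x y ∧
      ckmul d src rng mul p q x (c • y) = c • ckmul d src rng mul p q x y) ∧
    (∀ r' : G, r' ∈ P → ∀ x y z : Λ → ℂ,
      ckmul d src rng mul (p * q) r' (ckmul d src rng mul p q x y) z =
        ckmul d src rng mul p (q * r') x (ckmul d src rng mul q r' y z)) ∧
    (∀ a b : Λ, d a = p → d b = q →
      ckmul d src rng mul p q
          (fun c => if c = a then (1 : ℂ) else 0)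
          (fun c => if c = b then (1 : ℂ) else 0) =
        if rng a = src b then (fun c => if c = mul a b then (1 : ℂ) else 0)
        else 0) ∧
    (∀ x x' y y' : Λ → ℂ, CKmem d rng p x → CKmem d rng p x' →
      CKmem d rng q y → CKmem d rng q y' → ∀ v, d v = 1 →
      ckInner d rng (p * q) (ckmul d src rng mul p q x y)
          (ckmul d src rng mul p q x' y') v =
        ckInner d rng q (fun μ => ckInner d rng p x' x (src μ) * y μ) y' v) := by
  refine ⟨fun x y hx hy => hPS.ckmem_ckmul hp hq hx hy, fun x x' y => ?_, fun x y y' => ?_,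
    fun c x y => ⟨?_, ?_⟩, fun r' hr x y z => hPS.ckmul_assoc hp hq hr x y z,
    fun a b ha hb => hPS.ckmul_pointMass hp hq ha hb,
    fun x x' y y' hx hx' hy hy' v hv => hPS.ckInner_ckmul hp hq hx hx' hy hy' hv⟩
  all_goals
    funext c
    simp only [ckmul, Pi.add_apply, Pi.smul_apply, smul_eq_mul]
    split_ifs <;> ring

end PSG
end
end

section
/- Let E = (E⁰, E¹, r, s) be a countable directed graph and let X(E) be the associated Banach space of functions on E¹. For y,z ∈ X(E) let Θ_{y,z} : X(E) → X(E) be the bounded linear operator x ↦ y·⟨z,x⟩, i.e. (Θ_{y,z} x)(λ) = y(λ) ∑_{μ∈E¹, r(μ)=r(λ)} conj(z(μ)) x(μ). If S : X(E) → X(E) is a bounded linear operator lying in the operator-norm closure of the linear span of {Θ_{y,z} : y,z ∈ X(E)}, then the function λ ↦ ‖S(δ_λ)‖ vanishes at infinity on E¹ (tends to 0 along the cofinite filter on E¹). -/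
open scoped Classical

noncomputable section

namespace PSG

/-- Membership in the Cuntz–Krieger module `X(E)` of a single graph. -/
def memX {V E : Type*} (r : E → V) (x : E → ℂ) : Prop :=
  (∀ v : V, Summable fun l : {l : E // r l = v} => ‖x l.1‖ ^ 2) ∧
  Filter.Tendsto (fun v : V => ∑' l : {l : E // r l = v}, ‖x l.1‖ ^ 2)
    Filter.cofinite (nhds 0)

/-- The norm on `X(E)`: `‖x‖ = sup_v (∑_{r(λ)=v} |x(λ)|²)^{1/2}`. -/
def Xnorm {V E : Type*} (r : E → V) (x : E → ℂ) : ℝ :=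
  ⨆ v : V, Real.sqrt (∑' l : {l : E // r l = v}, ‖x l.1‖ ^ 2)

/-- The rank-one operator `Θ_{y,z} : x ↦ y ⋅ ⟨z, x⟩` on `X(E)`. -/
def theta {V E : Type*} (r : E → V) (y z x : E → ℂ) : E → ℂ :=
  fun l => y l * ∑' m : {m : E // r m = r l}, (starRingEnd ℂ) (z m.1) * x m.1

section Lemmas

open Filter Topology

variable {V E : Type*} {r : E → V} {x y : E → ℂ}

lemma memX.bddAbove_range (hx : memX r x) :
    BddAbove (Set.range fun v : V => √(∑' l : {l : E // r l = v}, ‖x l.1‖ ^ 2)) :=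
  ((Real.continuous_sqrt.tendsto 0).comp hx.2).bddAbove_range_of_cofinite

lemma Xnorm_nonneg (r : E → V) (x : E → ℂ) : 0 ≤ Xnorm r x :=
  Real.iSup_nonneg fun _ => Real.sqrt_nonneg _

/-- Membership in `X(E)` and the norm bound both pass to pointwise dominated functions. -/
lemma memX.of_norm_le (hy : memX r y) {C : ℝ} (hC : 0 ≤ C) (h : ∀ l, ‖x l‖ ≤ C * ‖y l‖) :
    memX r x ∧ Xnorm r x ≤ C * Xnorm r y := by
  have hsq : ∀ l, ‖x l‖ ^ 2 ≤ C ^ 2 * ‖y l‖ ^ 2 := fun l => by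
    rw [← mul_pow]
    exact pow_le_pow_left₀ (norm_nonneg _) (h l) 2
  have hsum : ∀ v : V, Summable fun l : {l : E // r l = v} => ‖x l.1‖ ^ 2 := fun v =>
    .of_nonneg_of_le (fun _ => by positivity) (fun l => hsq l.1) ((hy.1 v).mul_left _)
  have hle : ∀ v : V, ∑' l : {l : E // r l = v}, ‖x l.1‖ ^ 2 ≤
      C ^ 2 * ∑' l : {l : E // r l = v}, ‖y l.1‖ ^ 2 := fun v => by
    rw [← tsum_mul_left]
    exact (hsum v).tsum_le_tsum (fun l => hsq l.1) ((hy.1 v).mul_left _)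
  refine ⟨⟨hsum, ?_⟩, ?_⟩
  · exact squeeze_zero (fun v => tsum_nonneg fun _ => by positivity) hle
      (by simpa using hy.2.const_mul (C ^ 2))
  · refine Real.iSup_le (fun v => ?_) (mul_nonneg hC (Xnorm_nonneg r y))
    calc √(∑' l : {l : E // r l = v}, ‖x l.1‖ ^ 2)
        ≤ √(C ^ 2 * ∑' l : {l : E // r l = v}, ‖y l.1‖ ^ 2) := Real.sqrt_le_sqrt (hle v)
      _ = C * √(∑' l : {l : E // r l = v}, ‖y l.1‖ ^ 2) := by
        rw [Real.sqrt_mul (sq_nonneg C), Real.sqrt_sq hC]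
      _ ≤ C * Xnorm r y := mul_le_mul_of_nonneg_left (le_ciSup hy.bddAbove_range v) hC

/-- Minkowski's inequality for square-summable families. -/
lemma sqrt_tsum_norm_add_sq_le {ι F : Type*} [SeminormedAddCommGroup F] {f g : ι → F}
    (hf : Summable fun i => ‖f i‖ ^ 2) (hg : Summable fun i => ‖g i‖ ^ 2) :
    (Summable fun i => ‖f i + g i‖ ^ 2) ∧
      √(∑' i, ‖f i + g i‖ ^ 2) ≤ √(∑' i, ‖f i‖ ^ 2) + √(∑' i, ‖g i‖ ^ 2) := by
  obtain ⟨hsum, hle⟩ := Real.Lp_add_le_tsum_of_nonneg (p := 2) one_le_two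
    (fun i => norm_nonneg (f i)) (fun i => norm_nonneg (g i)) (by simpa using hf)
    (by simpa using hg)
  simp only [Real.rpow_two, ← Real.sqrt_eq_rpow] at hsum hle
  have hsq : ∀ i, ‖f i + g i‖ ^ 2 ≤ (‖f i‖ + ‖g i‖) ^ 2 := fun i =>
    pow_le_pow_left₀ (norm_nonneg _) (norm_add_le _ _) 2
  have hfg : Summable fun i => ‖f i + g i‖ ^ 2 :=
    .of_nonneg_of_le (fun _ => by positivity) hsq hsum
  exact ⟨hfg, (Real.sqrt_le_sqrt (hfg.tsum_le_tsum hsq hsum)).trans hle⟩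

lemma memX.add (hx : memX r x) (hy : memX r y) :
    memX r (x + y) ∧ Xnorm r (x + y) ≤ Xnorm r x + Xnorm r y := by
  have hM := fun v : V => sqrt_tsum_norm_add_sq_le (hx.1 v) (hy.1 v)
  refine ⟨⟨fun v => (hM v).1, ?_⟩, Real.iSup_le (fun v => (hM v).2.trans ?_)
    (add_nonneg (Xnorm_nonneg r x) (Xnorm_nonneg r y))⟩
  · have hlim := ((((Real.continuous_sqrt.tendsto 0).comp hx.2).add
      ((Real.continuous_sqrt.tendsto 0).comp hy.2)).pow 2)
    simp only [Real.sqrt_zero, add_zero, ne_eq, OfNat.ofNat_ne_zero, not_false_eq_true,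
      zero_pow] at hlim
    refine squeeze_zero (fun v => tsum_nonneg fun _ => by positivity) (fun v => ?_) hlim
    exact (Real.sqrt_le_iff.1 (hM v).2).2
  · exact add_le_add (le_ciSup hx.bddAbove_range v) (le_ciSup hy.bddAbove_range v)

lemma memX_zero (r : E → V) : memX r 0 ∧ Xnorm r 0 = 0 := by
  simp [memX, Xnorm, tendsto_const_nhds, summable_zero]

lemma memX_sum {ι : Type*} (s : Finset ι) {f : ι → E → ℂ} (hf : ∀ i, memX r (f i)) :
    memX r (∑ i ∈ s, f i) ∧ Xnorm r (∑ i ∈ s, f i) ≤ ∑ i ∈ s, Xnorm r (f i) := by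
  induction s using Finset.induction_on with
  | empty => simpa using ⟨(memX_zero r).1, (memX_zero r).2.le⟩
  | insert i s hi ih =>
    rw [Finset.sum_insert hi, Finset.sum_insert hi]
    exact ⟨((hf i).add ih.1).1, ((hf i).add ih.1).2.trans (by gcongr; exact ih.2)⟩

/-- Elements of `X(E)` vanish at infinity on the edge set. -/
lemma memX.tendsto_norm_cofinite (hx : memX r x) :
    Tendsto (fun l => ‖x l‖) cofinite (𝓝 0) := by
  rw [Metric.tendsto_nhds]
  intro ε hε
  have hV := hx.2.eventually_lt_const (show (0 : ℝ) < ε ^ 2 by positivity)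
  have hle : ∀ l, ‖x l‖ ^ 2 ≤ ∑' m : {m : E // r m = r l}, ‖x m.1‖ ^ 2 := fun l =>
    (hx.1 (r l)).le_tsum ⟨l, rfl⟩ fun _ _ => by positivity
  have hfib : ∀ v : V, {l : E | r l = v ∧ ε ≤ ‖x l‖}.Finite := fun v => by
    have hev := (hx.1 v).tendsto_cofinite_zero.eventually_lt_const
      (show (0 : ℝ) < ε ^ 2 by positivity)
    refine ((eventually_cofinite.1 hev).image Subtype.val).subset ?_
    rintro l ⟨hl, hεl⟩
    exact ⟨⟨l, hl⟩, not_lt.2 (pow_le_pow_left₀ hε.le hεl 2), rfl⟩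
  refine eventually_cofinite.2
    (((eventually_cofinite.1 hV).biUnion fun v _ => hfib v).subset fun l hl => ?_)
  have hεl : ε ≤ ‖x l‖ := by simpa using hl
  simp only [Set.mem_iUnion]
  exact ⟨r l, not_lt.2 ((pow_le_pow_left₀ hε.le hεl 2).trans (hle l)), rfl, hεl⟩

lemma memX_delta (r : E → V) (l : E) :
    memX r (fun m => if m = l then (1 : ℂ) else 0) ∧
      Xnorm r (fun m => if m = l then (1 : ℂ) else 0) ≤ 1 := by
  have hval : ∀ v : V, HasSum (fun m : {m : E // r m = v} =>
      ‖(if m.1 = l then (1 : ℂ) else 0)‖ ^ 2) (if r l = v then 1 else 0) := fun v => by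
    split_ifs with h
    · convert hasSum_ite_eq (⟨l, h⟩ : {m : E // r m = v}) (1 : ℝ) using 2 with m
      by_cases hm : m.1 = l <;> simp [hm, Subtype.ext_iff]
    · convert hasSum_zero using 2 with m
      have hm : m.1 ≠ l := fun hm => h (hm ▸ m.2)
      simp [hm]
  refine ⟨⟨fun v => (hval v).summable, ?_⟩, Real.iSup_le (fun v => ?_) zero_le_one⟩
  · simp only [(hval _).tsum_eq]
    refine tendsto_const_nhds.congr' (eventually_cofinite.2
      ((Set.finite_singleton (r l)).subset fun v hv => ?_))
    by_contra hne
    exact hv (by simp [Ne.symm hne])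
  · rw [(hval v).tsum_eq]
    split_ifs <;> simp

lemma norm_theta_delta_le (r : E → V) (y z : E → ℂ) (l m : E) :
    ‖theta r y z (fun m => if m = l then (1 : ℂ) else 0) m‖ ≤ ‖z l‖ * ‖y m‖ := by
  rw [theta, norm_mul, mul_comm]
  gcongr
  by_cases h : r l = r m
  · rw [tsum_eq_single ⟨l, h⟩ fun b hb => by
      simp [show b.1 ≠ l from fun hbl => hb (Subtype.ext hbl)]]
    simp
  · have hz : ∀ b : {b : E // r b = r m}, b.1 ≠ l := fun b hb => h (hb ▸ b.2)
    simp [hz]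

end Lemmas

/-- Lemma 5.1: if a bounded operator `S` on `X(E)` is an operator-norm limit of finite linear
combinations of rank-one operators `Θ_{y,z}` (i.e. `S` is a "compact" operator on `X(E)`),
then `λ ↦ ‖S(δ_λ)‖` vanishes at infinity on `E¹`. -/
theorem stmt19 {V E : Type*} [Countable V] [Countable E] (r s : E → V)
    (S : (E → ℂ) → (E → ℂ))
    (hmaps : ∀ x, memX r x → memX r (S x))
    (hadd : ∀ x y, memX r x → memX r y → S (x + y) = S x + S y)
    (hsmul : ∀ (c : ℂ) (x), memX r x → S (c • x) = c • S x)
    (happrox : ∀ ε : ℝ, 0 < ε →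
      ∃ (n : ℕ) (c : Fin n → ℂ) (y z : Fin n → E → ℂ),
        (∀ i, memX r (y i) ∧ memX r (z i)) ∧
        ∀ x, memX r x →
          Xnorm r (S x - ∑ i, c i • theta r (y i) (z i) x) ≤ ε * Xnorm r x) :
    Filter.Tendsto
      (fun l : E => Xnorm r (S fun m => if m = l then (1 : ℂ) else 0))
      Filter.cofinite (nhds 0) := by
  refine Metric.tendsto_nhds.2 fun ε hε => ?_
  obtain ⟨n, c, y, z, hyz, hS⟩ := happrox (ε / 2) (half_pos hε)
  have hlim : Filter.Tendsto (fun l => ∑ i, ‖c i‖ * ‖z i l‖ * Xnorm r (y i))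
      Filter.cofinite (nhds 0) := by
    simpa using tendsto_finsetSum Finset.univ fun i _ =>
      (((hyz i).2.tendsto_norm_cofinite).const_mul ‖c i‖).mul_const (Xnorm r (y i))
  filter_upwards [hlim.eventually_lt_const (half_pos hε)] with l hl
  set δ : E → ℂ := fun m => if m = l then (1 : ℂ) else 0
  obtain ⟨hδ, hδ_norm⟩ : memX r δ ∧ Xnorm r δ ≤ 1 := memX_delta r l
  have hθ : ∀ i, memX r (c i • theta r (y i) (z i) δ) ∧
      Xnorm r (c i • theta r (y i) (z i) δ) ≤ ‖c i‖ * ‖z i l‖ * Xnorm r (y i) := fun i =>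
    (hyz i).1.of_norm_le (by positivity) fun m => by
      rw [Pi.smul_apply, norm_smul, mul_assoc]
      gcongr
      exact norm_theta_delta_le r (y i) (z i) l m
  obtain ⟨hT, hT_norm⟩ := memX_sum Finset.univ fun i => (hθ i).1
  set T : E → ℂ := ∑ i, c i • theta r (y i) (z i) δ
  have hdiff : memX r (S δ - T) := by
    rw [sub_eq_add_neg]
    exact ((hmaps δ hδ).add (hT.of_norm_le zero_le_one fun m => by simp).1).1
  have htri := (hdiff.add hT).2
  rw [sub_add_cancel] at htri
  have hbound : Xnorm r (S δ) < ε := by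
    have hT' := hT_norm.trans (Finset.sum_le_sum fun i _ => (hθ i).2)
    have hSδ := (hS δ hδ).trans (mul_le_of_le_one_right (half_pos hε).le hδ_norm)
    linarith
  simpa [abs_of_nonneg (Xnorm_nonneg r _)] using hbound

end PSG
end
end
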